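/- Let f = x^n + ⋯ + a_1 x + 1 ∈ F_2[x] be a monic irreducible polynomial of degree n ≥ 1 with constant term 1. Then f^Q is irreducible over F_2 if and only if a_1 = coeff f 1 = 1. -/

import Mathlib

open Polynomial

noncomputable def Qtrans (f : Polynomial (ZMod 2)) : Polynomial (ZMod 2) :=
  ∑ i ∈ Finset.range (f.natDegree + 1),
    C (f.coeff i) * X ^ (f.natDegree - i) * (X ^ 2 + 1) ^ i

/-!
Let `a` be a root of `f` and `b` a solution of `b + b⁻¹ = a`, so that `b` is a root of the
`Q`-transform of `f`, which has degree `2 deg f`. As `a` lies in `F(b)`, comparing degrees in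
`F ⊆ F(a) ⊆ F(b)` shows that the transform is irreducible if and only if `X² - aX + 1` is
irreducible over `F(a)`. Over a finite field of characteristic two, substituting `X = aZ` turns
the latter into the Artin–Schreier equation `Z² - Z = a⁻²`, whose solvability is detected by the
absolute trace of `a⁻²`, which is also that of `a⁻¹`. Finally, the trace of `a⁻¹` down to `F` is
read off the reverse of `f`: it is `-f₁ / f₀` for `f = ∑ fᵢ Xⁱ`.
-/

section QTransform

variable {R : Type*} [CommSemiring R]

/-- The `Q`-transform `Xⁿ f(X + X⁻¹)` of a polynomial `f` of degree `n`, over any commutative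
semiring; `Qtrans` is the case of `ZMod 2`. The powers of `X⁻¹` are cleared termwise. -/
noncomputable def qTransform (f : R[X]) : R[X] :=
  ∑ i ∈ Finset.range (f.natDegree + 1), C (f.coeff i) * X ^ (f.natDegree - i) * (X ^ 2 + 1) ^ i

theorem aeval_qTransform {A : Type*} [CommSemiring A] [Algebra R A] (f : R[X]) {a b : A}
    (hab : b ^ 2 + 1 = a * b) : aeval b (qTransform f) = b ^ f.natDegree * aeval a f := by
  rw [qTransform, map_sum, aeval_eq_sum_range, Finset.mul_sum]
  refine Finset.sum_congr rfl fun i hi ↦ ?_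
  have hpow : b ^ f.natDegree = b ^ (f.natDegree - i) * b ^ i := by
    rw [← pow_add, Nat.sub_add_cancel (Finset.mem_range_succ_iff.mp hi)]
  simp only [map_mul, map_pow, map_add, map_one, aeval_X, aeval_C, hab, Algebra.smul_def, hpow]
  ring

theorem natDegree_C_mul_X_pow_mul_X_sq_add_one_pow_le (c : R) (k i : ℕ) :
    (C c * X ^ k * (X ^ 2 + 1) ^ i).natDegree ≤ k + i * 2 := by
  compute_degree

theorem coeff_qTransform_natDegree_mul_two (f : R[X]) :
    (qTransform f).coeff (f.natDegree * 2) = f.leadingCoeff := by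
  have htop : ((X ^ 2 + 1 : R[X]) ^ f.natDegree).coeff (f.natDegree * 2) = 1 := by
    have hdeg : (X ^ 2 + 1 : R[X]).natDegree ≤ 2 := by compute_degree
    simp [coeff_pow_of_natDegree_le hdeg, coeff_one]
  have hlower : ∀ i ∈ Finset.range f.natDegree,
      (C (f.coeff i) * X ^ (f.natDegree - i) * (X ^ 2 + 1) ^ i).coeff (f.natDegree * 2) = 0 := by
    intro i hi
    have hlt := Finset.mem_range.mp hi
    have hdeg := natDegree_C_mul_X_pow_mul_X_sq_add_one_pow_le (f.coeff i) (f.natDegree - i) i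
    exact coeff_eq_zero_of_natDegree_lt (by lia)
  rw [qTransform, Finset.sum_range_succ, coeff_add, finsetSum_coeff, Finset.sum_eq_zero hlower,
    zero_add, Nat.sub_self, pow_zero, mul_one, coeff_C_mul, htop, mul_one, leadingCoeff]

theorem natDegree_qTransform (f : R[X]) : (qTransform f).natDegree = f.natDegree * 2 := by
  rcases eq_or_ne f 0 with rfl | hf
  · simp [qTransform]
  refine natDegree_eq_of_le_of_coeff_ne_zero (natDegree_sum_le_of_forall_le _ _ fun i hi ↦ ?_) ?_
  · have hle := Finset.mem_range_succ_iff.mp hi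
    have hdeg := natDegree_C_mul_X_pow_mul_X_sq_add_one_pow_le (f.coeff i) (f.natDegree - i) i
    lia
  · rwa [coeff_qTransform_natDegree_mul_two, leadingCoeff_ne_zero]

theorem qTransform_ne_zero {f : R[X]} (hf : f ≠ 0) : qTransform f ≠ 0 := by
  intro h
  apply leadingCoeff_ne_zero.mpr hf
  rw [← coeff_qTransform_natDegree_mul_two, h, coeff_zero]

end QTransform

section SimpleExtensions

open IntermediateField

variable {F L : Type*} [Field F] [Field L] [Algebra F L]

theorem irreducible_iff_natDegree_minpoly_eq {p : F[X]} (hp : p ≠ 0) {x : L}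
    (hx : aeval x p = 0) : Irreducible p ↔ (minpoly F x).natDegree = p.natDegree := by
  refine ⟨fun hirr ↦ ?_, fun hdeg ↦ ?_⟩
  · rw [← minpoly.eq_of_irreducible hirr hx, natDegree_mul_C (by simpa using hp)]
  · have hint : IsIntegral F x := isAlgebraic_iff_isIntegral.mp ⟨p, hp, hx⟩
    exact (associated_of_dvd_of_natDegree_le (minpoly.dvd F x hx) hp hdeg.ge).irreducible
      (minpoly.irreducible hint)

theorem natDegree_minpoly_eq_mul_of_mem_adjoin_simple {a b : L} (hb : IsIntegral F b)
    (hab : a ∈ F⟮b⟯) :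
    (minpoly F b).natDegree = (minpoly F a).natDegree * (minpoly F⟮a⟯ b).natDegree := by
  have : FiniteDimensional F F⟮b⟯ := adjoin.finiteDimensional hb
  have ha : IsIntegral F a := (IsIntegral.of_finite F (⟨a, hab⟩ : F⟮b⟯)).map F⟮b⟯.val
  have htower : F⟮a⟯⟮b⟯.restrictScalars F = F⟮b⟯ := by
    rw [adjoin_simple_adjoin_simple]
    exact le_antisymm (adjoin_le_iff.mpr (by simp [Set.insert_subset_iff, hab]))
      (adjoin.mono _ _ _ (by simp))
  rw [← adjoin.finrank hb, ← adjoin.finrank ha, ← adjoin.finrank hb.tower_top, ← htower]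
  exact (Module.finrank_mul_finrank F F⟮a⟯ F⟮a⟯⟮b⟯).symm

theorem irreducible_qTransform_iff {f : F[X]} (hf : Irreducible f) {a b : L}
    (ha : aeval a f = 0) (hab : b ^ 2 + 1 = a * b) :
    Irreducible (qTransform f) ↔
      Irreducible (X ^ 2 - C (AdjoinSimple.gen F a) * X + 1 : F⟮a⟯[X]) := by
  set g : F⟮a⟯[X] := X ^ 2 - C (AdjoinSimple.gen F a) * X + 1
  have hg : g.natDegree = 2 := by simp only [g]; compute_degree!
  have hbf : aeval b (qTransform f) = 0 := by rw [aeval_qTransform f hab, ha, mul_zero]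
  have hbg : aeval b g = 0 := by
    simp only [g, map_add, map_sub, map_mul, map_pow, map_one, aeval_X, aeval_C,
      AdjoinSimple.algebraMap_gen]
    linear_combination hab
  have hbint : IsIntegral F b :=
    isAlgebraic_iff_isIntegral.mp ⟨_, qTransform_ne_zero hf.ne_zero, hbf⟩
  have hab_mem : a ∈ F⟮b⟯ := by
    have hb0 : b ≠ 0 := by rintro rfl; simp at hab
    rw [eq_div_of_mul_eq hb0 hab.symm]
    have hb_mem := mem_adjoin_simple_self F b
    exact div_mem (add_mem (pow_mem hb_mem 2) (one_mem _)) hb_mem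
  have hdeg := natDegree_minpoly_eq_mul_of_mem_adjoin_simple hbint hab_mem
  rw [(irreducible_iff_natDegree_minpoly_eq hf.ne_zero ha).mp hf] at hdeg
  rw [irreducible_iff_natDegree_minpoly_eq (qTransform_ne_zero hf.ne_zero) hbf, hdeg,
    natDegree_qTransform, Nat.mul_right_inj hf.natDegree_pos.ne',
    irreducible_iff_natDegree_minpoly_eq (ne_zero_of_natDegree_gt (hg ▸ two_pos)) hbg, hg]

theorem adjoin_simple_inv (x : L) : F⟮x⁻¹⟯ = F⟮x⟯ :=
  le_antisymm (adjoin_simple_le_iff.mpr (inv_mem (mem_adjoin_simple_self F x)))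
    (adjoin_simple_le_iff.mpr (by simpa using inv_mem (mem_adjoin_simple_self F x⁻¹)))

theorem natDegree_reverse_of_coeff_zero_ne_zero {R : Type*} [Semiring R] {p : R[X]}
    (hp : p.coeff 0 ≠ 0) : p.reverse.natDegree = p.natDegree := by
  rw [reverse_natDegree, natTrailingDegree_eq_zero.mpr (Or.inr hp), Nat.sub_zero]

theorem nextCoeff_reverse {R : Type*} [Semiring R] {p : R[X]} (hp : p.coeff 0 ≠ 0) :
    p.reverse.nextCoeff = p.coeff 1 := by
  have hrev := natDegree_reverse_of_coeff_zero_ne_zero hp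
  rcases Nat.eq_zero_or_pos p.natDegree with hdeg | hdeg
  · rw [nextCoeff, if_pos (hrev.trans hdeg), coeff_eq_zero_of_natDegree_lt (hdeg ▸ one_pos)]
  rw [nextCoeff_of_natDegree_pos (hrev ▸ hdeg), hrev, coeff_reverse, revAt_le (Nat.sub_le _ _),
    Nat.sub_sub_self hdeg]

theorem minpoly_inv {x : L} (hx : IsIntegral F x) (hx0 : x ≠ 0) :
    minpoly F x⁻¹ = C ((minpoly F x).coeff 0)⁻¹ * (minpoly F x).reverse := by
  have hcoeff := minpoly.coeff_zero_ne_zero hx hx0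
  have hdeg : (minpoly F x⁻¹).natDegree = (minpoly F x).natDegree := by
    rw [← adjoin.finrank hx.inv, ← adjoin.finrank hx, adjoin_simple_inv]
  have hroot : aeval x⁻¹ (minpoly F x).reverse = 0 := by
    let := invertibleOfNonzero hx0
    rw [← invOf_eq_inv]
    exact (eval₂_reverse_eq_zero_iff _ x _).mpr (minpoly.aeval F x)
  have hmonic : (C ((minpoly F x).coeff 0)⁻¹ * (minpoly F x).reverse).Monic := by
    rw [Monic, leadingCoeff_mul, leadingCoeff_C, reverse_leadingCoeff, trailingCoeff,
      natTrailingDegree_eq_zero.mpr (Or.inr hcoeff), inv_mul_cancel₀ hcoeff]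
  refine (eq_of_monic_of_dvd_of_natDegree_le (minpoly.monic hx.inv) hmonic
    (minpoly.dvd F _ (by rw [map_mul, hroot, mul_zero])) ?_).symm
  rw [natDegree_C_mul (inv_ne_zero hcoeff), natDegree_reverse_of_coeff_zero_ne_zero hcoeff, hdeg]

theorem nextCoeff_minpoly_inv {f : F[X]} (hf : Irreducible f) {x : L} (hx : aeval x f = 0)
    (hx0 : x ≠ 0) : (minpoly F x⁻¹).nextCoeff = f.coeff 1 / f.coeff 0 := by
  have hint : IsIntegral F x := isAlgebraic_iff_isIntegral.mp ⟨f, hf.ne_zero, hx⟩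
  rw [minpoly_inv hint hx0, nextCoeff_C_mul,
    nextCoeff_reverse (minpoly.coeff_zero_ne_zero hint hx0), inv_mul_eq_div,
    ← minpoly.eq_of_irreducible hf hx, coeff_mul_C, coeff_mul_C,
    mul_div_mul_right _ _ (inv_ne_zero (leadingCoeff_ne_zero.mpr hf.ne_zero))]

theorem trace_adjoinSimpleGen_inv {f : F[X]} (hf : Irreducible f) {x : L} (hx : aeval x f = 0)
    (hx0 : x ≠ 0) :
    Algebra.trace F F⟮x⟯ (AdjoinSimple.gen F x)⁻¹ = -(f.coeff 1 / f.coeff 0) := by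
  have hint : IsIntegral F x := isAlgebraic_iff_isIntegral.mp ⟨f, hf.ne_zero, hx⟩
  have hgen : equivOfEq (adjoin_simple_inv x) (AdjoinSimple.gen F x⁻¹) =
      (AdjoinSimple.gen F x)⁻¹ := rfl
  rw [← hgen, Algebra.trace_eq_of_algEquiv, trace_adjoinSimpleGen hint.inv,
    nextCoeff_minpoly_inv hf hx hx0]

end SimpleExtensions

section ArtinSchreier

variable {K L : Type*} [Field K] [Fintype K] [Field L] [Algebra K L]

theorem mem_range_algebraMap_iff_pow_card_eq [Algebra.IsIntegral K L] {x : L} :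
    x ∈ (algebraMap K L).range ↔ x ^ Fintype.card K = x := by
  have hx : IsIntegral K x := Algebra.IsIntegral.isIntegral x
  rw [← minpoly.natDegree_eq_one_iff, ← Nat.dvd_one,
    (minpoly.irreducible hx).natDegree_dvd_iff_dvd_X_pow_card_pow_sub_X, minpoly.dvd_iff, pow_one,
    Nat.card_eq_fintype_card, map_sub, map_pow, aeval_X, sub_eq_zero]

theorem trace_pow_card [Algebra.IsAlgebraic K L] (x : L) :
    Algebra.trace K L (x ^ Fintype.card K) = Algebra.trace K L x :=
  Algebra.trace_eq_of_algEquiv (FiniteField.frobeniusAlgEquivOfAlgebraic K L) x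

/-- Additive Hilbert 90 for finite fields. -/
theorem trace_eq_zero_iff_exists_pow_card_sub_self [FiniteDimensional K L] {x : L} :
    Algebra.trace K L x = 0 ↔ ∃ y, y ^ Fintype.card K - y = x := by
  let φ : L →ₗ[K] L := (FiniteField.frobeniusAlgHom K L).toLinearMap - LinearMap.id
  have hφ (y : L) : φ y = y ^ Fintype.card K - y := rfl
  have hle : φ.range ≤ (Algebra.trace K L).ker := by
    rintro _ ⟨y, rfl⟩
    rw [LinearMap.mem_ker, hφ, map_sub, trace_pow_card, sub_self]
  have hker : φ.ker = K ∙ (1 : L) := by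
    ext y
    rw [LinearMap.mem_ker, hφ, sub_eq_zero, ← mem_range_algebraMap_iff_pow_card_eq,
      Submodule.mem_span_singleton]
    simp only [RingHom.mem_range, Algebra.smul_def, mul_one]
  have hfrob := φ.finrank_range_add_finrank_ker
  rw [hker, finrank_span_singleton one_ne_zero] at hfrob
  have htrace := (Algebra.trace K L).finrank_range_add_finrank_ker
  rw [LinearMap.range_eq_top.mpr (Algebra.trace_surjective K L), finrank_top,
    Module.finrank_self] at htrace
  have hrange : φ.range = (Algebra.trace K L).ker :=
    Submodule.eq_of_le_of_finrank_eq hle (by lia)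
  rw [← LinearMap.mem_ker, ← hrange, LinearMap.mem_range]
  simp only [hφ]

end ArtinSchreier

section CharTwo

variable {K : Type*} [Field K] [Finite K] [Algebra (ZMod 2) K]

theorem irreducible_X_sq_add_C_mul_X_add_C_iff {b : K} (hb : b ≠ 0) (c : K) :
    Irreducible (X ^ 2 + C b * X + C c) ↔ Algebra.trace (ZMod 2) K (c / b ^ 2) = 1 := by
  have hmonic : (X ^ 2 + C b * X + C c).Monic := by monicity!
  have hdeg : (X ^ 2 + C b * X + C c).natDegree = 2 := by compute_degree!
  have : CharP K 2 := charP_of_injective_algebraMap' (ZMod 2) 2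
  have hroot (z : K) : (X ^ 2 + C b * X + C c).IsRoot (b * z) ↔ z ^ 2 - z = c / b ^ 2 := by
    simp only [IsRoot.def, eval_add, eval_mul, eval_pow, eval_X, eval_C]
    rw [CharTwo.add_eq_zero, eq_div_iff (pow_ne_zero 2 hb), CharTwo.sub_eq_add]
    ring_nf
  calc Irreducible (X ^ 2 + C b * X + C c)
      ↔ ¬∃ y, (X ^ 2 + C b * X + C c).IsRoot y := by
        rw [hmonic.irreducible_iff_roots_eq_zero_of_degree_le_three hdeg.ge (by lia),
          Multiset.eq_zero_iff_forall_notMem, not_exists]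
        simp only [mem_roots hmonic.ne_zero]
    _ ↔ ¬∃ z : K, z ^ 2 - z = c / b ^ 2 := by
        rw [(mul_left_surjective₀ hb).exists]
        simp only [hroot]
    _ ↔ Algebra.trace (ZMod 2) K (c / b ^ 2) ≠ 0 := by
        rw [Ne, trace_eq_zero_iff_exists_pow_card_sub_self, ZMod.card]
    _ ↔ Algebra.trace (ZMod 2) K (c / b ^ 2) = 1 := by
        generalize Algebra.trace (ZMod 2) K (c / b ^ 2) = t
        decide +revert

theorem irreducible_X_sq_sub_C_mul_X_add_one_iff {a : K} (ha : a ≠ 0) :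
    Irreducible (X ^ 2 - C a * X + 1) ↔ Algebra.trace (ZMod 2) K a⁻¹ = 1 := by
  have hpoly : X ^ 2 - C a * X + 1 = X ^ 2 + C (-a) * X + C 1 := by
    rw [C_neg, C_1, neg_mul, sub_eq_add_neg]
  have htrace : Algebra.trace (ZMod 2) K (a⁻¹ ^ 2) = Algebra.trace (ZMod 2) K a⁻¹ := by
    simpa only [ZMod.card] using trace_pow_card (K := ZMod 2) a⁻¹
  rw [hpoly, irreducible_X_sq_add_C_mul_X_add_C_iff (neg_ne_zero.mpr ha), neg_sq, one_div,
    ← inv_pow, htrace]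

end CharTwo

theorem exists_sq_add_one_eq_mul {k : Type*} [Field k] [IsAlgClosed k] (a : k) :
    ∃ b, b ^ 2 + 1 = a * b := by
  have hdeg : (X ^ 2 - C a * X + 1 : k[X]).degree = 2 := by compute_degree!
  obtain ⟨b, hb⟩ := IsAlgClosed.exists_root (X ^ 2 - C a * X + 1) (by simp [hdeg])
  simp only [IsRoot.def, eval_add, eval_sub, eval_mul, eval_pow, eval_X, eval_C, eval_one] at hb
  exact ⟨b, by linear_combination hb⟩

open IntermediateField in
theorem stmt_13_general {F : Type*} [Field F] [Finite F] [Algebra (ZMod 2) F] {f : F[X]}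
    (hf : Irreducible f) (h0 : f.coeff 0 ≠ 0) :
    Irreducible (qTransform f) ↔ Algebra.trace (ZMod 2) F (f.coeff 1 / f.coeff 0) = 1 := by
  obtain ⟨a, ha⟩ := IsAlgClosed.exists_aeval_eq_zero (AlgebraicClosure F) f
    (degree_pos_of_irreducible hf).ne'
  obtain ⟨b, hab⟩ := exists_sq_add_one_eq_mul a
  have ha0 : a ≠ 0 := by
    rintro rfl
    rw [← coeff_zero_eq_aeval_zero'] at ha
    simp [h0] at ha
  have : FiniteDimensional F F⟮a⟯ :=
    adjoin.finiteDimensional (isAlgebraic_iff_isIntegral.mp ⟨f, hf.ne_zero, ha⟩)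
  have : Finite F⟮a⟯ := Module.finite_of_finite F
  have hgen : AdjoinSimple.gen F a ≠ 0 := by simpa [Subtype.ext_iff] using ha0
  rw [irreducible_qTransform_iff hf ha hab, irreducible_X_sq_sub_C_mul_X_add_one_iff hgen,
    ← Algebra.trace_trace (S := F), trace_adjoinSimpleGen_inv hf ha ha0, map_neg,
    ZMod.neg_eq_self_mod_two]

theorem stmt_13 (n : ℕ) (hn : 1 ≤ n) (f : Polynomial (ZMod 2))
    (hmon : f.Monic) (hirr : Irreducible f) (hdeg : f.natDegree = n)
    (h0 : f.coeff 0 = 1) :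
    Irreducible (Qtrans f) ↔ f.coeff 1 = 1 := by
  change Irreducible (qTransform f) ↔ f.coeff 1 = 1
  simpa [h0] using stmt_13_general hirr (h0 ▸ one_ne_zero)
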